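/- arXiv:math/9803047 — 2 statements merged into one kernel-verified Lean document; each statement's English description precedes it below -/
import Mathlib

section
/- Let n, s, t ∈ ℕ and let M be the symmetric integer matrix of size N = 1 + n + s + t indexed by a central vertex v and three chains of lengths n, s, t, defined by: M v v = -3; every chain vertex w has M w w = -2; consecutive vertices within each chain have intersection entry 1; the first vertex of each chain has intersection entry 1 with v; and all other off-diagonal entries are 0. Let c ∈ ℚ^N be the vector with c v = 1 and all other entries 0 (this is c i = -2 - M i i for genera p ≡ 0). Then M is negative definite and -cᵀ M⁻¹ c = 1 / (3 - n/(n+1) - s/(s+1) - t/(t+1)). -/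
open Matrix

/-- The intersection matrix of the rational triple point `I_{n,s,t}`: a central `(-3)`-curve
with three attached chains of `n`, `s` and `t` rational `(-2)`-curves. -/
def tripleMatrix (n s t : ℕ) :
    Matrix (Unit ⊕ Fin n ⊕ Fin s ⊕ Fin t) (Unit ⊕ Fin n ⊕ Fin s ⊕ Fin t) ℤ :=
  fun x y =>
    match x, y with
    | .inl _, .inl _ => -3
    | .inl _, .inr (.inl a) => if (a : ℕ) = 0 then 1 else 0
    | .inr (.inl a), .inl _ => if (a : ℕ) = 0 then 1 else 0
    | .inl _, .inr (.inr (.inl a)) => if (a : ℕ) = 0 then 1 else 0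
    | .inr (.inr (.inl a)), .inl _ => if (a : ℕ) = 0 then 1 else 0
    | .inl _, .inr (.inr (.inr a)) => if (a : ℕ) = 0 then 1 else 0
    | .inr (.inr (.inr a)), .inl _ => if (a : ℕ) = 0 then 1 else 0
    | .inr (.inl a), .inr (.inl b) =>
        if a = b then -2 else if (a : ℕ) + 1 = (b : ℕ) ∨ (b : ℕ) + 1 = (a : ℕ) then 1 else 0
    | .inr (.inr (.inl a)), .inr (.inr (.inl b)) =>
        if a = b then -2 else if (a : ℕ) + 1 = (b : ℕ) ∨ (b : ℕ) + 1 = (a : ℕ) then 1 else 0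
    | .inr (.inr (.inr a)), .inr (.inr (.inr b)) =>
        if a = b then -2 else if (a : ℕ) + 1 = (b : ℕ) ∨ (b : ℕ) + 1 = (a : ℕ) then 1 else 0
    | _, _ => 0

/-- The vector `c i = -2 - M i i` for genera `p ≡ 0`: it is `1` on the central `(-3)`-curve and
`0` on all `(-2)`-curves. -/
def tripleC (n s t : ℕ) : Unit ⊕ Fin n ⊕ Fin s ⊕ Fin t → ℚ :=
  Sum.elim (fun _ => 1) (fun _ => 0)

/-- The intersection matrix of a chain of `n` rational `(-2)`-curves. -/
def chainMatrix (n : ℕ) : Matrix (Fin n) (Fin n) ℤ := fun a b =>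
  if a = b then -2 else if (a : ℕ) + 1 = (b : ℕ) ∨ (b : ℕ) + 1 = (a : ℕ) then 1 else 0

/-- The indicator vector of the first curve of a chain. -/
def chainHead (n : ℕ) : Fin n → ℤ := fun a => if (a : ℕ) = 0 then 1 else 0

section Chain

variable {n : ℕ}

@[simp] lemma chainMatrix_zero_zero : chainMatrix (n + 1) 0 0 = -2 := by
  simp [chainMatrix]

@[simp] lemma chainMatrix_zero_succ (j : Fin n) :
    chainMatrix (n + 1) 0 j.succ = chainHead n j := by
  simp [chainMatrix, chainHead, Fin.ext_iff, eq_comm]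

@[simp] lemma chainMatrix_succ_zero (j : Fin n) :
    chainMatrix (n + 1) j.succ 0 = chainHead n j := by
  simp [chainMatrix, chainHead, Fin.ext_iff, eq_comm]

@[simp] lemma chainMatrix_succ_succ (i j : Fin n) :
    chainMatrix (n + 1) i.succ j.succ = chainMatrix n i j := by
  simp [chainMatrix]

@[simp] lemma chainHead_zero : chainHead (n + 1) 0 = 1 := by simp [chainHead]

@[simp] lemma chainHead_succ (j : Fin n) : chainHead (n + 1) j.succ = 0 := by simp [chainHead]

end Chain

section Field

variable {K : Type*} [Field K]

/-- The self-intersection of a cycle supported on a chain and the curve to which the chain is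
attached, the latter having multiplicity `z` and self-intersection `-1`. -/
def chainForm (n : ℕ) (z : K) (x : Fin n → K) : K :=
  -z ^ 2 + 2 * z * ∑ j, (chainHead n j : K) * x j + ∑ i, x i * ∑ j, (chainMatrix n i j : K) * x j

lemma sum_mul_chainHead_mul (n : ℕ) (z : K) (x : Fin n → K) :
    ∑ i, x i * ((chainHead n i : K) * z) = z * ∑ i, (chainHead n i : K) * x i := by
  rw [Finset.mul_sum]
  exact Finset.sum_congr rfl fun i _ => by ring

lemma chainForm_succ (n : ℕ) (z : K) (x : Fin (n + 1) → K) :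
    chainForm (n + 1) z x = -(z - x 0) ^ 2 + chainForm n (x 0) (fun i => x i.succ) := by
  have h := sum_mul_chainHead_mul n (x 0) fun i => x i.succ
  simp only [chainForm, Fin.sum_univ_succ, chainHead_zero, chainHead_succ, chainMatrix_zero_zero,
    chainMatrix_zero_succ, chainMatrix_succ_zero, chainMatrix_succ_succ, mul_add,
    Finset.sum_add_distrib, h]
  simp
  ring

lemma chainForm_nonpos [LinearOrder K] [IsStrictOrderedRing K] (n : ℕ) (z : K) (x : Fin n → K) :
    chainForm n z x ≤ 0 := by
  induction n generalizing z with
  | zero => simpa [chainForm] using sq_nonneg z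
  | succ n ih =>
    rw [chainForm_succ]
    linarith [ih (x 0) fun i => x i.succ, sq_nonneg (z - x 0)]

lemma chainForm_eq_zero [LinearOrder K] [IsStrictOrderedRing K] (n : ℕ) (z : K) (x : Fin n → K)
    (h : chainForm n z x = 0) : z = 0 ∧ x = 0 := by
  induction n generalizing z with
  | zero => exact ⟨by simpa [chainForm] using h, Subsingleton.elim _ _⟩
  | succ n ih =>
    rw [chainForm_succ] at h
    have h₁ := chainForm_nonpos n (x 0) fun i => x i.succ
    have h₂ := sq_nonneg (z - x 0)
    obtain ⟨h₃, h₄⟩ := ih (x 0) (fun i => x i.succ) (by linarith)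
    have h₅ : (z - x 0) ^ 2 = 0 := by linarith
    refine ⟨by simpa [h₃] using h₅, funext fun i => ?_⟩
    induction i using Fin.cases with
    | zero => exact h₃
    | succ i => exact congrFun h₄ i

lemma sum_chainHead_mul (n : ℕ) (w : ℕ → K) (hw : w n = 0) :
    ∑ j : Fin n, (chainHead n j : K) * w j = w 0 := by
  cases n with
  | zero => simp [hw]
  | succ n => simp [Fin.sum_univ_succ]

/-- A chain acts on a sequence vanishing at its far end as the second difference. -/
lemma sum_chainMatrix_mul (n : ℕ) (w : ℕ → K) (hw : w (n + 1) = 0) (i : Fin n) :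
    (chainHead n i : K) * w 0 + ∑ j : Fin n, (chainMatrix n i j : K) * w (j + 1) =
      w i - 2 * w (i + 1) + w (i + 2) := by
  induction n generalizing w with
  | zero => exact i.elim0
  | succ n ih =>
    rw [Fin.sum_univ_succ]
    induction i using Fin.cases with
    | zero =>
      have := sum_chainHead_mul n (fun k => w (k + 2)) hw
      simp only [chainMatrix_zero_zero, chainMatrix_zero_succ, chainHead_zero, Fin.val_succ,
        Fin.val_zero, add_assoc, one_add_one_eq_two, zero_add] at this ⊢
      rw [this]
      push_cast
      ring
    | succ i =>
      have := ih (fun k => w (k + 1)) hw i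
      simp only [chainMatrix_succ_zero, chainMatrix_succ_succ, chainHead_succ, Fin.val_succ,
        Fin.val_zero, Int.cast_zero, zero_mul, zero_add] at this ⊢
      rw [this]

lemma dotProduct_tripleMatrix_mulVec (n s t : ℕ) (x : Unit ⊕ Fin n ⊕ Fin s ⊕ Fin t → K) :
    x ⬝ᵥ (((tripleMatrix n s t).map (Int.cast : ℤ → K)) *ᵥ x) =
      chainForm n (x (.inl ())) (fun i => x (.inr (.inl i))) +
      chainForm s (x (.inl ())) (fun i => x (.inr (.inr (.inl i)))) +
      chainForm t (x (.inl ())) (fun i => x (.inr (.inr (.inr i)))) := by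
  have hn := sum_mul_chainHead_mul n (x (.inl ())) fun i => x (.inr (.inl i))
  have hs := sum_mul_chainHead_mul s (x (.inl ())) fun i => x (.inr (.inr (.inl i)))
  have ht := sum_mul_chainHead_mul t (x (.inl ())) fun i => x (.inr (.inr (.inr i)))
  simp only [chainHead] at hn hs ht
  simp only [dotProduct, mulVec, Fintype.sum_sum_type, map_apply, tripleMatrix, chainForm,
    chainHead, chainMatrix, Finset.univ_unique, Finset.sum_singleton, PUnit.default_eq_unit,
    Int.cast_zero, zero_mul, mul_zero, Finset.sum_const_zero, add_zero, zero_add, mul_add,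
    Finset.sum_add_distrib, hn, hs, ht]
  push_cast
  ring

lemma tripleMatrix_neg_def [LinearOrder K] [IsStrictOrderedRing K] (n s t : ℕ)
    (x : Unit ⊕ Fin n ⊕ Fin s ⊕ Fin t → K) (hx : x ≠ 0) :
    x ⬝ᵥ (((tripleMatrix n s t).map (Int.cast : ℤ → K)) *ᵥ x) < 0 := by
  rw [dotProduct_tripleMatrix_mulVec]
  have hn := chainForm_nonpos n (x (.inl ())) fun i => x (.inr (.inl i))
  have hs := chainForm_nonpos s (x (.inl ())) fun i => x (.inr (.inr (.inl i)))
  have ht := chainForm_nonpos t (x (.inl ())) fun i => x (.inr (.inr (.inr i)))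
  refine lt_of_le_of_ne (by linarith) fun h => hx ?_
  obtain ⟨hz, hn_zero⟩ := chainForm_eq_zero n _ _ (le_antisymm hn (by linarith))
  obtain ⟨-, hs_zero⟩ := chainForm_eq_zero s _ _ (le_antisymm hs (by linarith))
  obtain ⟨-, ht_zero⟩ := chainForm_eq_zero t _ _ (le_antisymm ht (by linarith))
  funext i
  rcases i with _ | i | i | i
  exacts [hz, congrFun hn_zero i, congrFun hs_zero i, congrFun ht_zero i]

/-- The affine sequence with value `z` at `0` and value `0` at `m + 1`. -/
def chainWeight (z : K) (m k : ℕ) : K := z * (1 - k / (m + 1))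

lemma chainWeight_zero (z : K) (m : ℕ) : chainWeight z m 0 = z := by simp [chainWeight]

lemma chainWeight_last [CharZero K] (z : K) (m : ℕ) : chainWeight z m (m + 1) = 0 := by
  have : (m : K) + 1 ≠ 0 := Nat.cast_add_one_ne_zero m
  simp [chainWeight, this]

lemma chainHead_chainWeight [CharZero K] (z : K) (m : ℕ) :
    ∑ j : Fin m, (chainHead m j : K) * chainWeight z m (j + 1) = z * (m / (m + 1)) := by
  rw [sum_chainHead_mul m (fun k => chainWeight z m (k + 1)) (chainWeight_last z m)]
  have : (m : K) + 1 ≠ 0 := Nat.cast_add_one_ne_zero m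
  simp only [chainWeight]
  field_simp
  push_cast
  ring

lemma chainMatrix_chainWeight [CharZero K] (z : K) (m : ℕ) (i : Fin m) :
    (chainHead m i : K) * z + ∑ j : Fin m, (chainMatrix m i j : K) * chainWeight z m (j + 1) =
      0 := by
  have := sum_chainMatrix_mul m (chainWeight z m) (chainWeight_last z m) i
  rw [chainWeight_zero] at this
  rw [this]
  simp only [chainWeight]
  push_cast
  ring

/-- The cycle with multiplicity `z` on the central curve which is orthogonal to all other curves. -/
def tripleWeight (z : K) (n s t : ℕ) : Unit ⊕ Fin n ⊕ Fin s ⊕ Fin t → K :=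
  Sum.elim (fun _ => z) (Sum.elim (fun i => chainWeight z n (i + 1))
    (Sum.elim (fun i => chainWeight z s (i + 1)) (fun i => chainWeight z t (i + 1))))

end Field

lemma tripleMatrix_mulVec_tripleWeight (z : ℚ) (n s t : ℕ) :
    ((tripleMatrix n s t).map (Int.cast : ℤ → ℚ)) *ᵥ tripleWeight z n s t =
      (-(z * (3 - (n : ℚ) / (n + 1) - (s : ℚ) / (s + 1) - (t : ℚ) / (t + 1)))) •
        tripleC n s t := by
  have hn := chainHead_chainWeight z n
  have hs := chainHead_chainWeight z s
  have ht := chainHead_chainWeight z t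
  have hn_zero := chainMatrix_chainWeight z n
  have hs_zero := chainMatrix_chainWeight z s
  have ht_zero := chainMatrix_chainWeight z t
  simp only [chainHead, chainMatrix] at hn hs ht hn_zero hs_zero ht_zero
  funext i
  rcases i with _ | i | i | i <;>
  simp only [dotProduct, mulVec, Fintype.sum_sum_type, map_apply, tripleMatrix, tripleWeight,
    tripleC, Finset.univ_unique, Finset.sum_singleton, Sum.elim_inl, Sum.elim_inr, Pi.smul_apply,
    Int.cast_zero, zero_mul, Finset.sum_const_zero, add_zero, zero_add, smul_eq_mul, mul_zero,
    mul_one, hn, hs, ht, hn_zero, hs_zero, ht_zero]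
  push_cast
  ring

/-- **Example 2.7, type `I_{n,s,t}`.** The intersection matrix of the rational triple point
`I_{n,s,t}` is negative definite and `-K² = 1/(3 - n/(n+1) - s/(s+1) - t/(t+1))`. -/
theorem negK2_triple_point_I (n s t : ℕ) :
    (∀ x : Unit ⊕ Fin n ⊕ Fin s ⊕ Fin t → ℝ, x ≠ 0 →
      x ⬝ᵥ (((tripleMatrix n s t).map (Int.cast : ℤ → ℝ)) *ᵥ x) < 0) ∧
    - (tripleC n s t ⬝ᵥ (((tripleMatrix n s t).map (Int.cast : ℤ → ℚ))⁻¹ *ᵥ tripleC n s t)) =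
      1 / (3 - (n : ℚ) / ((n : ℚ) + 1) - (s : ℚ) / ((s : ℚ) + 1) - (t : ℚ) / ((t : ℚ) + 1)) := by
  refine ⟨tripleMatrix_neg_def n s t, ?_⟩
  have hlt (m : ℕ) : (m : ℚ) / (m + 1) < 1 := by
    rw [div_lt_one (by positivity)]
    linarith
  set D : ℚ := 3 - (n : ℚ) / (n + 1) - (s : ℚ) / (s + 1) - (t : ℚ) / (t + 1) with hD
  have hD0 : D ≠ 0 := ne_of_gt (by linarith [hlt n, hlt s, hlt t])
  set M := (tripleMatrix n s t).map (Int.cast : ℤ → ℚ) with hM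
  have hdet : IsUnit M.det := by
    rw [isUnit_iff_ne_zero]
    intro h
    obtain ⟨v, hv, hMv⟩ := exists_mulVec_eq_zero_iff.mpr h
    have := tripleMatrix_neg_def n s t v hv
    rw [← hM, hMv, dotProduct_zero] at this
    exact this.false
  have hsolve : M *ᵥ tripleWeight (-(1 / D)) n s t = tripleC n s t := by
    rw [tripleMatrix_mulVec_tripleWeight, ← hD]
    simp [hD0]
  have hinv : M⁻¹ *ᵥ tripleC n s t = tripleWeight (-(1 / D)) n s t := by
    rw [← hsolve, mulVec_mulVec, nonsing_inv_mul M hdet, one_mulVec]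
  rw [hinv]
  simp [dotProduct, tripleC, tripleWeight]
end

section
/- For every rational number v there exists N ∈ ℕ such that for every resolution datum (M, p) (of any size r) with -cᵀ M⁻¹ c = v, the numerical index of (M, p) — namely the least positive integer ρ such that every entry of ρ · (M⁻¹ c) ∈ ℚ^r is an integer — satisfies ρ ≤ N. -/
open Matrix

structure ResolutionDatum (r : ℕ) where
  M : Matrix (Fin r) (Fin r) ℤ
  p : Fin r → ℕ
  symm : M.IsSymm
  negdef : ∀ x : Fin r → ℝ, x ≠ 0 → x ⬝ᵥ ((M.map (Int.cast : ℤ → ℝ)) *ᵥ x) < 0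
  offdiag_nonneg : ∀ i j : Fin r, i ≠ j → 0 ≤ M i j
  diag_le_neg_two : ∀ i : Fin r, p i = 0 → M i i ≤ -2
  connected : (SimpleGraph.fromRel (fun i j : Fin r => 0 < M i j)).Connected

/-- The vector `c i = 2 p i - 2 - M i i` (the values `K · A_i`). -/
def ResolutionDatum.c {r : ℕ} (D : ResolutionDatum r) : Fin r → ℚ :=
  fun i => 2 * (D.p i : ℚ) - 2 - (D.M i i : ℚ)

/-- `-K² = -cᵀ M⁻¹ c`. -/
noncomputable def ResolutionDatum.negK2 {r : ℕ} (D : ResolutionDatum r) : ℚ :=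
  - (D.c ⬝ᵥ ((D.M.map (Int.cast : ℤ → ℚ))⁻¹ *ᵥ D.c))

/-- The set of all values `-K²` of normal surface singularities. -/
def negK2Set : Set ℝ :=
  { x : ℝ | ∃ (r : ℕ) (_ : 0 < r) (D : ResolutionDatum r), x = (D.negK2 : ℝ) }

section Network

variable {ι : Type*}

/-- The contribution of an edge `(u, w, ℓ)`, thought of as a chain of `ℓ` unit edges joining `u`
to `w`, to the energy form of a network. -/
def edgeForm (x y : ι → ℚ) (e : ι × ι × ℕ) : ℚ :=
  (x e.2.1 - x e.1) * (y e.2.1 - y e.1) / (e.2.2 : ℚ)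

/-- The slope along an edge of a function on the vertices. -/
def edgeSlope (x : ι → ℚ) (e : ι × ι × ℕ) : ℚ :=
  (x e.2.1 - x e.1) / (e.2.2 : ℚ)

/-- The number of ends of the edge `e` at the vertex `i`. -/
def edgeEnds [DecidableEq ι] (i : ι) (e : ι × ι × ℕ) : ℕ :=
  (if e.1 = i then 1 else 0) + (if e.2.1 = i then 1 else 0)

/-- The energy form of a network with vertex set `V`, vertex weights `a` and edges `E`. -/
def networkForm (V : Finset ι) (a : ι → ℤ) (E : Multiset (ι × ι × ℕ)) (x y : ι → ℚ) : ℚ :=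
  ∑ i ∈ V, (a i : ℚ) * x i * y i - (E.map (edgeForm x y)).sum

/-- `n` solves the equation with right-hand side `-c` on the negative definite network
`(V, a, E)`, all of whose vertices with `a i = 0` and `c i = 0` have valency two. -/
structure IsNetworkSolution [DecidableEq ι] (V : Finset ι) (a c : ι → ℤ)
    (E : Multiset (ι × ι × ℕ)) (n : ι → ℚ) : Prop where
  length_pos : ∀ e ∈ E, 0 < e.2.2
  ends_mem : ∀ e ∈ E, e.1 ∈ V ∧ e.2.1 ∈ V
  valency : ∀ i ∈ V, a i = 0 → c i = 0 → (E.map (edgeEnds i)).sum = 2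
  neg : ∀ x : ι → ℚ, (∃ i ∈ V, x i ≠ 0) → networkForm V a E x x < 0
  sol : ∀ x : ι → ℚ, networkForm V a E n x = -∑ i ∈ V, (c i : ℚ) * x i

/-- `ρ` clears the denominators of all values and slopes of `n`. -/
def ClearsDenominators (ρ : ℕ) (V : Finset ι) (E : Multiset (ι × ι × ℕ)) (n : ι → ℚ) : Prop :=
  (∀ i ∈ V, ∃ z : ℤ, (ρ : ℚ) * n i = z) ∧ ∀ e ∈ E, ∃ z : ℤ, (ρ : ℚ) * edgeSlope n e = z

theorem edgeForm_swap (x y : ι → ℚ) (u w : ι) (l : ℕ) :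
    edgeForm x y (w, u, l) = edgeForm x y (u, w, l) := by
  simp only [edgeForm]; ring

theorem edgeForm_congr {x x' y y' : ι → ℚ} {e : ι × ι × ℕ} (h₁ : x e.1 = x' e.1)
    (h₂ : x e.2.1 = x' e.2.1) (h₃ : y e.1 = y' e.1) (h₄ : y e.2.1 = y' e.2.1) :
    edgeForm x y e = edgeForm x' y' e := by
  simp only [edgeForm, h₁, h₂, h₃, h₄]

theorem ClearsDenominators.swap {V : Finset ι} {E : Multiset (ι × ι × ℕ)} {n : ι → ℚ} {ρ : ℕ}
    {u w : ι} {l : ℕ}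
    (h : ClearsDenominators ρ V ((u, w, l) ::ₘ E) n) :
    ClearsDenominators ρ V ((w, u, l) ::ₘ E) n := by
  refine ⟨h.1, fun e he => ?_⟩
  rcases Multiset.mem_cons.1 he with rfl | he
  · obtain ⟨z, hz⟩ := h.2 (u, w, l) (Multiset.mem_cons_self _ _)
    refine ⟨-z, ?_⟩
    push_cast
    rw [← hz]
    simp only [edgeSlope]
    ring
  · exact h.2 e (Multiset.mem_cons_of_mem he)

variable [DecidableEq ι] {V : Finset ι} {a c : ι → ℤ} {E : Multiset (ι × ι × ℕ)} {n : ι → ℚ}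

theorem edgeEnds_swap (i u w : ι) (l : ℕ) :
    edgeEnds i (w, u, l) = edgeEnds i (u, w, l) := by
  simp only [edgeEnds]; ring

theorem edgeEnds_eq_zero_iff {i : ι} {e : ι × ι × ℕ} :
    edgeEnds i e = 0 ↔ e.1 ≠ i ∧ e.2.1 ≠ i := by
  unfold edgeEnds; split_ifs <;> simp_all

theorem IsNetworkSolution.swap {u w : ι} {l : ℕ}
    (h : IsNetworkSolution V a c ((u, w, l) ::ₘ E) n) :
    IsNetworkSolution V a c ((w, u, l) ::ₘ E) n where
  length_pos e he := by
    rcases Multiset.mem_cons.1 he with rfl | he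
    · exact h.length_pos (u, w, l) (Multiset.mem_cons_self _ _)
    · exact h.length_pos e (Multiset.mem_cons_of_mem he)
  ends_mem e he := by
    rcases Multiset.mem_cons.1 he with rfl | he
    · exact (h.ends_mem (u, w, l) (Multiset.mem_cons_self _ _)).symm
    · exact h.ends_mem e (Multiset.mem_cons_of_mem he)
  valency i hi ha hc := by
    simpa only [Multiset.map_cons, Multiset.sum_cons, edgeEnds_swap i u w] using
      h.valency i hi ha hc
  neg x hx := by
    simpa only [networkForm, Multiset.map_cons, Multiset.sum_cons, edgeForm_swap x x u w] using
      h.neg x hx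
  sol x := by
    simpa only [networkForm, Multiset.map_cons, Multiset.sum_cons, edgeForm_swap n x u w] using
      h.sol x

/-- An edge with an end at `i` can be oriented so as to end at `i`. -/
theorem exists_oriented_edge {i : ι} (hi : (E.map (edgeEnds i)).sum ≠ 0) :
    ∃ (u : ι) (l : ℕ) (F : Multiset (ι × ι × ℕ)),
      E = (u, i, l) ::ₘ F ∨ E = (i, u, l) ::ₘ F := by
  have : ∃ e ∈ E, edgeEnds i e ≠ 0 := by
    by_contra! hE
    refine hi (Multiset.sum_eq_zero fun q hq => ?_)
    obtain ⟨e, he, rfl⟩ := Multiset.mem_map.1 hq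
    exact hE e he
  obtain ⟨⟨u, w, l⟩, he, hei⟩ := this
  obtain ⟨F, rfl⟩ := Multiset.exists_cons_of_mem he
  rw [Ne, edgeEnds_eq_zero_iff, not_and_or, not_not, not_not] at hei
  rcases hei with rfl | rfl
  · exact ⟨w, l, F, Or.inr rfl⟩
  · exact ⟨u, l, F, Or.inl rfl⟩

/-- Merging the two edges at a vertex of valency two. -/
theorem IsNetworkSolution.merge {i u w : ι} {l k : ℕ} {F : Multiset (ι × ι × ℕ)}
    (h : IsNetworkSolution V a c ((u, i, l) ::ₘ (i, w, k) ::ₘ F) n) (hi : i ∈ V)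
    (hu : u ≠ i) (hw : w ≠ i) (hF : ∀ e ∈ F, e.1 ≠ i ∧ e.2.1 ≠ i)
    (ha : a i = 0) (hc : c i = 0) :
    IsNetworkSolution (V.erase i) a c ((u, w, l + k) ::ₘ F) n ∧
      ∀ ρ, ClearsDenominators ρ (V.erase i) ((u, w, l + k) ::ₘ F) n →
        ClearsDenominators ρ V ((u, i, l) ::ₘ (i, w, k) ::ₘ F) n := by
  have hl : 0 < l := h.length_pos (u, i, l) (by simp)
  have hk : 0 < k := h.length_pos (i, w, k) (by simp)
  have hl' : (l : ℚ) ≠ 0 := by positivity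
  have hk' : (k : ℚ) ≠ 0 := by positivity
  have hlk : (l : ℚ) + k ≠ 0 := by positivity
  have hVa : ∀ x y : ι → ℚ,
      ∑ j ∈ V, (a j : ℚ) * x j * y j = ∑ j ∈ V.erase i, (a j : ℚ) * x j * y j := fun x y => by
    rw [← Finset.add_sum_erase V _ hi, ha]; simp
  have hVc : ∀ x : ι → ℚ,
      ∑ j ∈ V, (c j : ℚ) * x j = ∑ j ∈ V.erase i, (c j : ℚ) * x j := fun x => by
    rw [← Finset.add_sum_erase V _ hi, hc]; simp
  have hslope : (n i - n u) / l = (n w - n i) / k := by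
    have := h.sol (Pi.single i 1)
    rw [hVc, networkForm, hVa, Finset.sum_eq_zero, Finset.sum_eq_zero] at this
    · have h0 : (F.map (edgeForm n (Pi.single i 1))).sum = 0 := by
        refine Multiset.sum_eq_zero fun q hq => ?_
        obtain ⟨e, he, rfl⟩ := Multiset.mem_map.1 hq
        simp [edgeForm, Pi.single_eq_of_ne (hF e he).1, Pi.single_eq_of_ne (hF e he).2]
      simp only [Multiset.map_cons, Multiset.sum_cons, h0, edgeForm, Pi.single_eq_same,
        Pi.single_eq_of_ne hu, Pi.single_eq_of_ne hw] at this
      linear_combination -this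
    · intro j hj; simp [Pi.single_eq_of_ne (Finset.ne_of_mem_erase hj)]
    · intro j hj; simp [Pi.single_eq_of_ne (Finset.ne_of_mem_erase hj)]
  have hnw : n w = n i + k * ((n i - n u) / l) := by rw [hslope]; field_simp; ring
  have hmerged : (n w - n u) / ((l : ℚ) + k) = (n i - n u) / l := by
    rw [hnw]; field_simp; ring
  refine ⟨⟨fun e he => ?_, fun e he => ?_, fun j hj haj hcj => ?_, ?_, fun x => ?_⟩, ?_⟩
  · rcases Multiset.mem_cons.1 he with rfl | he
    · exact Nat.add_pos_left hl k
    · exact h.length_pos e (by simp [he])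
  · rcases Multiset.mem_cons.1 he with rfl | he
    · exact ⟨Finset.mem_erase.2 ⟨hu, (h.ends_mem (u, i, l) (by simp)).1⟩,
        Finset.mem_erase.2 ⟨hw, (h.ends_mem (i, w, k) (by simp)).2⟩⟩
    · have := h.ends_mem e (by simp [he])
      exact ⟨Finset.mem_erase.2 ⟨(hF e he).1, this.1⟩, Finset.mem_erase.2 ⟨(hF e he).2, this.2⟩⟩
  · have := h.valency j (Finset.mem_of_mem_erase hj) haj hcj
    have hij : i ≠ j := (Finset.ne_of_mem_erase hj).symm
    simp only [Multiset.map_cons, Multiset.sum_cons, edgeEnds, hij, if_false] at this ⊢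
    omega
  · rintro x ⟨j, hj, hxj⟩
    set t : ℚ := (k * x u + l * x w) / (l + k) with ht
    set y := Function.update x i t with hy
    have hyx : ∀ j, j ≠ i → y j = x j := fun j hj => Function.update_of_ne hj _ _
    have hyi : y i = t := Function.update_self _ _ _
    have hneg := h.neg y ⟨j, Finset.mem_of_mem_erase hj, by
      rwa [hyx j (Finset.ne_of_mem_erase hj)]⟩
    have h1 : ∑ j ∈ V.erase i, (a j : ℚ) * y j * y j = ∑ j ∈ V.erase i, (a j : ℚ) * x j * x j :=
      Finset.sum_congr rfl fun j hj => by rw [hyx j (Finset.ne_of_mem_erase hj)]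
    have h2 : F.map (edgeForm y y) = F.map (edgeForm x x) :=
      Multiset.map_congr rfl fun e he => edgeForm_congr (hyx _ (hF e he).1) (hyx _ (hF e he).2)
        (hyx _ (hF e he).1) (hyx _ (hF e he).2)
    have h3 : edgeForm y y (u, i, l) + edgeForm y y (i, w, k) = edgeForm x x (u, w, l + k) := by
      simp only [edgeForm, hyx u hu, hyx w hw, hyi, ht]
      push_cast
      field_simp
      ring
    rw [networkForm, hVa, h1] at hneg
    simp only [Multiset.map_cons, Multiset.sum_cons, h2] at hneg
    simp only [networkForm, Multiset.map_cons, Multiset.sum_cons]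
    linarith
  · have := h.sol x
    rw [networkForm, hVa, hVc] at this
    have h3 : edgeForm n x (u, i, l) + edgeForm n x (i, w, k) = edgeForm n x (u, w, l + k) := by
      simp only [edgeForm]
      push_cast
      rw [mul_div_right_comm, mul_div_right_comm, mul_div_right_comm, hmerged, ← hslope]
      ring
    simp only [Multiset.map_cons, Multiset.sum_cons] at this
    simp only [networkForm, Multiset.map_cons, Multiset.sum_cons]
    linarith
  · rintro ρ ⟨hV, hE⟩
    obtain ⟨z, hz⟩ := hE (u, w, l + k) (by simp)
    simp only [edgeSlope, Nat.cast_add, hmerged] at hz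
    refine ⟨fun j hj => ?_, fun e he => ?_⟩
    · by_cases hji : j = i
      · subst hji
        obtain ⟨y, hy⟩ := hV u (Finset.mem_erase.2 ⟨hu, (h.ends_mem (u, j, l) (by simp)).1⟩)
        refine ⟨y + l * z, ?_⟩
        push_cast
        rw [← hy, ← hz]
        field_simp
        ring
      · exact hV j (Finset.mem_erase.2 ⟨hji, hj⟩)
    · rcases Multiset.mem_cons.1 he with rfl | he
      · exact ⟨z, hz⟩
      rcases Multiset.mem_cons.1 he with rfl | he
      · exact ⟨z, by rw [← hz, hslope]; rfl⟩
      · exact hE e (Multiset.mem_cons_of_mem he)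

theorem IsNetworkSolution.exists_erase (h : IsNetworkSolution V a c E n) {i : ι} (hi : i ∈ V)
    (ha : a i = 0) (hc : c i = 0) :
    ∃ E' : Multiset (ι × ι × ℕ), IsNetworkSolution (V.erase i) a c E' n ∧
      Multiset.card E' + 1 = Multiset.card E ∧
      ∀ ρ, ClearsDenominators ρ (V.erase i) E' n → ClearsDenominators ρ V E n := by
  have hval := h.valency i hi ha hc
  obtain ⟨u, l, F, hEF⟩ := exists_oriented_edge (E := E) (i := i) (by omega)
  wlog hE : E = (u, i, l) ::ₘ F generalizing E
  · have hE' := hEF.resolve_left hE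
    subst hE'
    obtain ⟨E', h1, h2, h3⟩ := this h.swap (h.swap.valency i hi ha hc) (Or.inl rfl) rfl
    exact ⟨E', h1, by simpa using h2, fun ρ hρ => (h3 ρ hρ).swap⟩
  subst hE
  clear hEF
  simp only [Multiset.map_cons, Multiset.sum_cons] at hval
  have hu : u ≠ i := by
    rintro rfl
    have hF : ∀ e ∈ F, e.1 ≠ u ∧ e.2.1 ≠ u := fun e he => by
      have h0 : (F.map (edgeEnds u)).sum = 0 := by simpa [edgeEnds] using hval
      rw [Multiset.sum_eq_zero_iff] at h0
      exact edgeEnds_eq_zero_iff.1 (h0 _ (Multiset.mem_map_of_mem _ he))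
    have hneg := h.neg (Pi.single u 1) ⟨u, hi, by simp⟩
    have h0 : (F.map (edgeForm (Pi.single u 1) (Pi.single u 1))).sum = 0 := by
      refine Multiset.sum_eq_zero fun q hq => ?_
      obtain ⟨e, he, rfl⟩ := Multiset.mem_map.1 hq
      simp [edgeForm, Pi.single_eq_of_ne (hF e he).1, Pi.single_eq_of_ne (hF e he).2]
    rw [networkForm, Finset.sum_eq_zero] at hneg
    · simp [h0, edgeForm] at hneg
    · intro j _
      by_cases hj : j = u
      · simp [hj, ha]
      · simp [Pi.single_eq_of_ne hj]
  have hval' : (F.map (edgeEnds i)).sum = 1 := by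
    simp only [edgeEnds, hu, if_false, if_true] at hval
    exact Nat.add_left_cancel (n := 1) (by simpa [edgeEnds] using hval)
  obtain ⟨w, k, G, hFG⟩ := exists_oriented_edge (E := F) (i := i) (by omega)
  wlog hF : F = (i, w, k) ::ₘ G generalizing F
  · have hF' := hFG.resolve_right hF
    subst hF'
    rw [Multiset.cons_swap] at h
    have h' := h.swap
    rw [Multiset.cons_swap] at h'
    obtain ⟨E', h1, h2, h3⟩ := this (F := (i, w, k) ::ₘ G) h'
      (by simpa only [Multiset.map_cons, Multiset.sum_cons, edgeEnds_swap i w i] using hval)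
      (by simpa only [Multiset.map_cons, Multiset.sum_cons, edgeEnds_swap i w i] using hval')
      (Or.inr rfl) rfl
    refine ⟨E', h1, by simpa using h2, fun ρ hρ => ?_⟩
    have := h3 ρ hρ
    rw [Multiset.cons_swap] at this ⊢
    exact this.swap
  subst hF
  simp only [Multiset.map_cons, Multiset.sum_cons] at hval'
  have hw : w ≠ i := by
    rintro rfl
    simp [edgeEnds] at hval'
    omega
  have hG0 : (G.map (edgeEnds i)).sum = 0 := by
    simpa [edgeEnds, hw] using hval'
  have hG : ∀ e ∈ G, e.1 ≠ i ∧ e.2.1 ≠ i := fun e he => by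
    rw [Multiset.sum_eq_zero_iff] at hG0
    exact edgeEnds_eq_zero_iff.1 (hG0 _ (Multiset.mem_map_of_mem _ he))
  obtain ⟨h1, h2⟩ := h.merge hi hu hw hG ha hc
  exact ⟨_, h1, by simp, h2⟩

/-- Every network reduces to one without vertices of valency two and trivial data. -/
theorem IsNetworkSolution.exists_reduced (h : IsNetworkSolution V a c E n) :
    ∃ V' ⊆ V, ∃ E' : Multiset (ι × ι × ℕ), IsNetworkSolution V' a c E' n ∧
      (∀ i ∈ V', a i ≠ 0 ∨ c i ≠ 0) ∧ (∀ i ∈ V, i ∉ V' → c i = 0) ∧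
      Multiset.card E' + V.card = Multiset.card E + V'.card ∧
      ∀ ρ, ClearsDenominators ρ V' E' n → ClearsDenominators ρ V E n := by
  induction hV : V.card generalizing V E with
  | zero =>
    obtain rfl := Finset.card_eq_zero.1 hV
    exact ⟨∅, subset_rfl, E, h, by simp, by simp, by simp, fun _ => id⟩
  | succ k ih =>
    by_cases hred : ∀ i ∈ V, a i ≠ 0 ∨ c i ≠ 0
    · exact ⟨V, subset_rfl, E, h, hred, fun i hi hi' => absurd hi hi', by omega, fun _ => id⟩
    · push Not at hred
      obtain ⟨i, hi, ha, hc⟩ := hred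
      obtain ⟨E₁, h1, h2, h3⟩ := h.exists_erase hi ha hc
      have hcard := Finset.card_erase_of_mem hi
      obtain ⟨V', hV', E', h4, h5, h6, h7, h8⟩ := ih h1 (by omega)
      refine ⟨V', hV'.trans (Finset.erase_subset _ _), E', h4, h5, fun j hj hj' => ?_, by omega,
        fun ρ hρ => h3 ρ (h8 ρ hρ)⟩
      by_cases hji : j = i
      · rw [hji, hc]
      · exact h6 j (Finset.mem_erase.2 ⟨hji, hj⟩) hj'

end Network

/-- The energy form of a network with vertices `Fin k` and edges `Fin m`, the edge `e` joining
`u e` to `w e` by a chain of `l e` unit edges. -/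
def finNetworkForm {k m : ℕ} (a : Fin k → ℤ) (u w : Fin m → Fin k) (l : Fin m → ℕ)
    (x y : Fin k → ℚ) : ℚ :=
  ∑ i, (a i : ℚ) * x i * y i - ∑ e, (x (w e) - x (u e)) * (y (w e) - y (u e)) / (l e : ℚ)

/-- `n` solves the equation with right-hand side `-c` on a negative definite network, and
pairs with `c` to `v`. -/
structure IsFinNetworkSolution {k m : ℕ} (a c : Fin k → ℤ) (u w : Fin m → Fin k) (v : ℚ)
    (l : Fin m → ℕ) (n : Fin k → ℚ) : Prop where
  length_pos : ∀ e, 0 < l e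
  neg : ∀ x : Fin k → ℚ, x ≠ 0 → finNetworkForm a u w l x x < 0
  sol : ∀ x : Fin k → ℚ, finNetworkForm a u w l n x = -∑ i, (c i : ℚ) * x i
  value : ∑ i, (c i : ℚ) * n i = v

theorem finNetworkForm_sub_sub {k m : ℕ} (a : Fin k → ℤ) (u w : Fin m → Fin k) (l : Fin m → ℕ)
    (x y : Fin k → ℚ) :
    finNetworkForm a u w l (x - y) (x - y) = finNetworkForm a u w l x x
      - 2 * finNetworkForm a u w l y x + finNetworkForm a u w l y y := by
  simp only [finNetworkForm, Pi.sub_apply, mul_sub, Finset.mul_sum]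
  have h1 : ∀ A B C A' B' C' : ℚ, A - A' - (B - B') + (C - C') = (A - B + C) - (A' - B' + C') :=
    fun _ _ _ _ _ _ => by ring
  rw [h1]
  simp only [← Finset.sum_sub_distrib, ← Finset.sum_add_distrib]
  congr 1
  · exact Finset.sum_congr rfl fun i _ => by ring
  · exact Finset.sum_congr rfl fun i _ => by ring

/-- Lengthening edges without changing the value changes neither the solution nor its slopes. -/
theorem IsFinNetworkSolution.eq_of_le {k m : ℕ} {a c : Fin k → ℤ} {u w : Fin m → Fin k} {v : ℚ}
    {l l' : Fin m → ℕ} {n n' : Fin k → ℚ} (h : IsFinNetworkSolution a c u w v l n)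
    (h' : IsFinNetworkSolution a c u w v l' n') (hl : l ≤ l') :
    n' = n ∧ ∀ e, (n (w e) - n (u e)) / (l' e : ℚ) = (n (w e) - n (u e)) / (l e : ℚ) := by
  have hterm : ∀ e, 0 ≤ (n (w e) - n (u e)) * (n (w e) - n (u e)) / (l e : ℚ)
      - (n (w e) - n (u e)) * (n (w e) - n (u e)) / (l' e : ℚ) := fun e => by
    have h1 : (0 : ℚ) < l e := by exact_mod_cast h.length_pos e
    have h2 : (l e : ℚ) ≤ l' e := by exact_mod_cast hl e
    exact sub_nonneg.2 (div_le_div_of_nonneg_left (mul_self_nonneg _) h1 h2)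
  have hdiff : finNetworkForm a u w l' n n - finNetworkForm a u w l n n =
      ∑ e, ((n (w e) - n (u e)) * (n (w e) - n (u e)) / (l e : ℚ)
        - (n (w e) - n (u e)) * (n (w e) - n (u e)) / (l' e : ℚ)) := by
    rw [Finset.sum_sub_distrib, finNetworkForm, finNetworkForm]
    ring
  have hsub := finNetworkForm_sub_sub a u w l' n n'
  rw [h'.sol n, h'.sol n', h'.value, h.value] at hsub
  have hnn := h.sol n
  rw [h.value] at hnn
  have hnonneg := Finset.sum_nonneg fun e (_ : e ∈ Finset.univ) => hterm e
  have hn : n' = n := by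
    by_contra hne
    have := h'.neg (n - n') (sub_ne_zero.2 (Ne.symm hne))
    linarith
  refine ⟨hn, fun e => ?_⟩
  subst hn
  have hzero := h'.sol n'
  rw [h.value] at hzero
  have hsum : ∑ e, ((n' (w e) - n' (u e)) * (n' (w e) - n' (u e)) / (l e : ℚ)
      - (n' (w e) - n' (u e)) * (n' (w e) - n' (u e)) / (l' e : ℚ)) = 0 := by linarith
  have he := (Finset.sum_eq_zero_iff_of_nonneg fun e _ => hterm e).1 hsum e (Finset.mem_univ e)
  have hmul : (n' (w e) - n' (u e)) *
      ((n' (w e) - n' (u e)) / (l' e : ℚ) - (n' (w e) - n' (u e)) / (l e : ℚ)) = 0 := by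
    linear_combination -he
  rcases mul_eq_zero.1 hmul with h0 | h0
  · simp [h0]
  · linarith

theorem exists_common_denominator {α : Type*} [Fintype α] (f : α → ℚ) :
    ∃ ρ : ℕ, 0 < ρ ∧ ∀ i, ∃ z : ℤ, (ρ : ℚ) * f i = z := by
  refine ⟨∏ i, (f i).den, Finset.prod_pos fun i _ => (f i).den_pos, fun i => ?_⟩
  obtain ⟨d, hd⟩ := Finset.dvd_prod_of_mem (fun i => (f i).den) (Finset.mem_univ i)
  refine ⟨d * (f i).num, ?_⟩
  rw [hd]
  push_cast
  rw [← Rat.den_mul_eq_num]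
  ring

/-- For a fixed combinatorial type and a fixed value, denominators are bounded independently of
the lengths of the edges. -/
theorem exists_bound_finNetwork {k m : ℕ} (a c : Fin k → ℤ) (u w : Fin m → Fin k) (v : ℚ) :
    ∃ N : ℕ, ∀ l n, IsFinNetworkSolution a c u w v l n → ∃ ρ : ℕ, 0 < ρ ∧ ρ ≤ N ∧
      (∀ i, ∃ z : ℤ, (ρ : ℚ) * n i = z) ∧
      ∀ e, ∃ z : ℤ, (ρ : ℚ) * ((n (w e) - n (u e)) / (l e : ℚ)) = z := by
  set P : (Fin m → ℕ) → Prop := fun l => ∃ n, IsFinNetworkSolution a c u w v l n with hP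
  have hfin : {l | Minimal P l}.Finite :=
    WellQuasiOrderedLE.finite_of_isAntichain (setOfPred_minimal_antichain P)
  have hden : ∀ l, ∃ ρ : ℕ, 0 < ρ ∧ ∀ n, IsFinNetworkSolution a c u w v l n →
      (∀ i, ∃ z : ℤ, (ρ : ℚ) * n i = z) ∧
      ∀ e, ∃ z : ℤ, (ρ : ℚ) * ((n (w e) - n (u e)) / (l e : ℚ)) = z := by
    intro l
    by_cases hl : P l
    · obtain ⟨n, hn⟩ := hl
      obtain ⟨ρ, hρ, h⟩ := exists_common_denominator
        (Sum.elim n fun e : Fin m => (n (w e) - n (u e)) / (l e : ℚ))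
      refine ⟨ρ, hρ, fun n' hn' => ?_⟩
      obtain ⟨rfl, -⟩ := hn.eq_of_le hn' le_rfl
      exact ⟨fun i => h (Sum.inl i), fun e => h (Sum.inr e)⟩
    · exact ⟨1, one_pos, fun n hn => absurd ⟨n, hn⟩ hl⟩
  choose ρ hρ hρ' using hden
  refine ⟨hfin.toFinset.sup ρ, fun l' n' h' => ?_⟩
  obtain ⟨l, hll', hl⟩ := exists_minimal_le_of_wellFoundedLT P l' ⟨n', h'⟩
  obtain ⟨n, hn⟩ := hl.prop
  obtain ⟨rfl, hslope⟩ := hn.eq_of_le h' hll'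
  refine ⟨ρ l, hρ l, Finset.le_sup (f := ρ) (hfin.mem_toFinset.2 hl), (hρ' l n' hn).1,
    fun e => ?_⟩
  rw [hslope]
  exact (hρ' l n' hn).2 e

theorem Set.Finite.exists_nat_bound {α : Type*} {s : Set α} (hs : s.Finite) {P : α → ℕ → Prop}
    (hP : ∀ x N N', N ≤ N' → P x N → P x N') (h : ∀ x ∈ s, ∃ N, P x N) :
    ∃ N, ∀ x ∈ s, P x N := by
  choose! f hf using h
  exact ⟨hs.toFinset.sup f, fun x hx =>
    hP x _ _ (Finset.le_sup (f := f) (hs.mem_toFinset.2 hx)) (hf x hx)⟩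

/-- For a fixed value, denominators are bounded over all networks of bounded size and weights. -/
theorem exists_bound_finNetwork_of_le (B : ℕ) (v : ℚ) :
    ∃ N : ℕ, ∀ k ≤ B, ∀ m ≤ B, ∀ (a c : Fin k → ℤ) (u w : Fin m → Fin k),
      (∀ i, |a i| ≤ B) → (∀ i, |c i| ≤ B) →
      ∀ l n, IsFinNetworkSolution a c u w v l n → ∃ ρ : ℕ, 0 < ρ ∧ ρ ≤ N ∧
        (∀ i, ∃ z : ℤ, (ρ : ℚ) * n i = z) ∧
        ∀ e, ∃ z : ℤ, (ρ : ℚ) * ((n (w e) - n (u e)) / (l e : ℚ)) = z := by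
  refine (Set.finite_Iic B).exists_nat_bound ?_ fun k _ => ?_
  · rintro x N N' hN h m hm a c u w ha hc l n hn
    obtain ⟨ρ, h1, h2, h3⟩ := h m hm a c u w ha hc l n hn
    exact ⟨ρ, h1, h2.trans hN, h3⟩
  refine (Set.finite_Iic B).exists_nat_bound ?_ fun m _ => ?_
  · rintro x N N' hN h a c u w ha hc l n hn
    obtain ⟨ρ, h1, h2, h3⟩ := h a c u w ha hc l n hn
    exact ⟨ρ, h1, h2.trans hN, h3⟩
  have hfin : ((Set.Icc (fun _ => -(B : ℤ)) (fun _ => (B : ℤ)) : Set (Fin k → ℤ)) ×ˢ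
      (Set.Icc (fun _ => -(B : ℤ)) (fun _ => (B : ℤ)) : Set (Fin k → ℤ)) ×ˢ
      (Set.univ : Set ((Fin m → Fin k) × (Fin m → Fin k)))).Finite :=
    (Set.finite_Icc _ _).prod ((Set.finite_Icc _ _).prod Set.finite_univ)
  obtain ⟨N, hN⟩ := hfin.exists_nat_bound (P := fun x N => ∀ l n,
      IsFinNetworkSolution x.1 x.2.1 x.2.2.1 x.2.2.2 v l n → ∃ ρ : ℕ, 0 < ρ ∧ ρ ≤ N ∧
        (∀ i, ∃ z : ℤ, (ρ : ℚ) * n i = z) ∧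
        ∀ e, ∃ z : ℤ, (ρ : ℚ) * ((n (x.2.2.2 e) - n (x.2.2.1 e)) / (l e : ℚ)) = z)
    (by
      rintro x N N' hN h l n hn
      obtain ⟨ρ, h1, h2, h3⟩ := h l n hn
      exact ⟨ρ, h1, h2.trans hN, h3⟩)
    (fun x _ => exists_bound_finNetwork x.1 x.2.1 x.2.2.1 x.2.2.2 v)
  refine ⟨N, fun a c u w ha hc => hN (a, c, u, w) ⟨?_, ?_, trivial⟩⟩
  · exact ⟨fun i => (abs_le.1 (ha i)).1, fun i => (abs_le.1 (ha i)).2⟩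
  · exact ⟨fun i => (abs_le.1 (hc i)).1, fun i => (abs_le.1 (hc i)).2⟩

theorem exists_bound_clearsDenominators (B : ℕ) (v : ℚ) :
    ∃ N : ℕ, ∀ (r : ℕ) (V : Finset (Fin r)) (a c : Fin r → ℤ)
      (E : Multiset (Fin r × Fin r × ℕ)) (n : Fin r → ℚ), IsNetworkSolution V a c E n →
      V.card ≤ B → Multiset.card E ≤ B → (∀ i, |a i| ≤ B) → (∀ i, |c i| ≤ B) →
      ∑ i ∈ V, (c i : ℚ) * n i = v → ∃ ρ : ℕ, 0 < ρ ∧ ρ ≤ N ∧ ClearsDenominators ρ V E n := by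
  obtain ⟨N, hN⟩ := exists_bound_finNetwork_of_le B v
  refine ⟨N, fun r V a c E n h hV hE ha hc hv => ?_⟩
  obtain ⟨es, rfl⟩ : ∃ es : List (Fin r × Fin r × ℕ), (es : Multiset _) = E :=
    ⟨E.toList, E.coe_toList⟩
  set σ : Fin V.card → Fin r := fun i => (V.equivFin.symm i : Fin r) with hσ
  have hσinj : Function.Injective σ := Subtype.val_injective.comp V.equivFin.symm.injective
  have hσsurj : ∀ i ∈ V, ∃ j, σ j = i := fun i hi => ⟨V.equivFin ⟨i, hi⟩, by simp [hσ]⟩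
  have hσmem : ∀ j, σ j ∈ V := fun j => (V.equivFin.symm j).2
  have hmem : ∀ e : Fin es.length, es.get e ∈ (es : Multiset (Fin r × Fin r × ℕ)) :=
    fun e => List.get_mem es e
  choose u hu using fun e => hσsurj _ (h.ends_mem _ (hmem e)).1
  choose w hw using fun e => hσsurj _ (h.ends_mem _ (hmem e)).2
  set l : Fin es.length → ℕ := fun e => (es.get e).2.2
  have hsum : ∀ f : Fin r → ℚ, ∑ i ∈ V, f i = ∑ j, f (σ j) := fun f => by
    rw [← Finset.sum_coe_sort V f]
    exact (Equiv.sum_comp V.equivFin.symm fun i : V => f i).symm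
  have hform : ∀ x y : Fin r → ℚ, networkForm V a es x y =
      finNetworkForm (a ∘ σ) u w l (x ∘ σ) (y ∘ σ) := fun x y => by
    rw [networkForm, finNetworkForm, hsum]
    congr 1
    rw [Multiset.map_coe, Multiset.sum_coe, ← Fin.sum_univ_fun_getElem]
    refine Finset.sum_congr rfl fun e _ => ?_
    simp only [Function.comp, hu, hw]
    rfl
  have hext : ∀ x : Fin V.card → ℚ, ∃ X : Fin r → ℚ, X ∘ σ = x := fun x =>
    ⟨Function.extend σ x 0, Function.extend_comp hσinj x 0⟩
  have hfin : IsFinNetworkSolution (a ∘ σ) (c ∘ σ) u w v l (n ∘ σ) := by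
    refine ⟨fun e => h.length_pos _ (hmem e), fun x hx => ?_, fun x => ?_, ?_⟩
    · obtain ⟨X, rfl⟩ := hext x
      obtain ⟨j, hj⟩ := Function.ne_iff.1 hx
      rw [← hform]
      exact h.neg X ⟨σ j, hσmem j, hj⟩
    · obtain ⟨X, rfl⟩ := hext x
      rw [← hform, h.sol, hsum]
      rfl
    · rw [← hv, hsum]
      rfl
  obtain ⟨ρ, hρ, hρN, h1, h2⟩ := hN V.card hV es.length hE (a ∘ σ) (c ∘ σ) u w
    (fun i => ha _) (fun i => hc _) l (n ∘ σ) hfin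
  refine ⟨ρ, hρ, hρN, fun i hi => ?_, fun e he => ?_⟩
  · obtain ⟨j, rfl⟩ := hσsurj i hi
    exact h1 j
  · obtain ⟨j, rfl⟩ := List.get_of_mem (show e ∈ es from he)
    obtain ⟨z, hz⟩ := h2 j
    refine ⟨z, ?_⟩
    simp only [Function.comp, hu, hw] at hz
    exact hz

/-- The multiset of unit edges of the graph with adjacency multiplicities `M i j`. -/
def unitEdges {r : ℕ} (M : Matrix (Fin r) (Fin r) ℤ) : Multiset (Fin r × Fin r × ℕ) :=
  ∑ q : Fin r × Fin r with q.1 < q.2, Multiset.replicate (M q.1 q.2).toNat (q.1, q.2, 1)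

theorem two_mul_sum_lt {r : ℕ} (f : Fin r → Fin r → ℚ) (hf : ∀ i j, f i j = f j i) :
    2 * ∑ q : Fin r × Fin r with q.1 < q.2, f q.1 q.2 = ∑ i, ∑ j, f i j - ∑ i, f i i := by
  have h1 : ∑ q : Fin r × Fin r with q.1 < q.2, f q.1 q.2 =
      ∑ i, ∑ j, if i < j then f i j else 0 := by
    rw [Finset.sum_filter, Fintype.sum_prod_type]
  have h2 : ∑ i, ∑ j, (if i < j then f i j else 0) = ∑ i, ∑ j, if j < i then f i j else 0 := by
    rw [Finset.sum_comm]
    simp only [hf]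
  have h3 : ∑ i, f i i = ∑ i, ∑ j, if i = j then f i j else 0 := by simp
  rw [two_mul, h1]
  nth_rewrite 2 [h2]
  rw [h3, ← Finset.sum_add_distrib, ← Finset.sum_sub_distrib]
  refine Finset.sum_congr rfl fun i _ => ?_
  rw [← Finset.sum_add_distrib, ← Finset.sum_sub_distrib]
  refine Finset.sum_congr rfl fun j _ => ?_
  rcases lt_trichotomy i j with h | rfl | h
  · simp [h, h.ne, h.not_gt]
  · simp
  · simp [h, h.ne', h.not_gt]

theorem mem_unitEdges_length {r : ℕ} {M : Matrix (Fin r) (Fin r) ℤ} {e : Fin r × Fin r × ℕ}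
    (he : e ∈ unitEdges M) : e.2.2 = 1 := by
  obtain ⟨q, -, hq⟩ := Multiset.mem_sum.1 he
  rw [Multiset.eq_of_mem_replicate hq]

theorem two_mul_sum_unitEdges {r : ℕ} {M : Matrix (Fin r) (Fin r) ℤ} (hM : M.IsSymm)
    (hM0 : ∀ i j, i ≠ j → 0 ≤ M i j) (g : Fin r × Fin r × ℕ → ℚ)
    (hg : ∀ i j, g (i, j, 1) = g (j, i, 1)) :
    2 * ((unitEdges M).map g).sum =
      ∑ i, ∑ j, (M i j : ℚ) * g (i, j, 1) - ∑ i, (M i i : ℚ) * g (i, i, 1) := by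
  rw [← two_mul_sum_lt (fun i j => (M i j : ℚ) * g (i, j, 1))
    fun i j => by rw [hM.apply j i, hg]]
  congr 1
  have := map_sum (Multiset.sumAddMonoidHom.comp (Multiset.mapAddMonoidHom g))
    (fun q : Fin r × Fin r => Multiset.replicate (M q.1 q.2).toNat (q.1, q.2, 1))
    {q : Fin r × Fin r | q.1 < q.2}
  simp only [AddMonoidHom.comp_apply, Multiset.coe_sumAddMonoidHom,
    Multiset.coe_mapAddMonoidHom] at this
  rw [unitEdges, this]
  refine Finset.sum_congr rfl fun q hq => ?_
  have hq0 := hM0 q.1 q.2 (Finset.mem_filter.1 hq).2.ne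
  rw [Multiset.map_replicate, Multiset.sum_replicate, nsmul_eq_mul]
  congr 1
  exact_mod_cast Int.toNat_of_nonneg hq0

namespace ResolutionDatum

variable {r : ℕ} (D : ResolutionDatum r)

/-- The integers `c i = 2 p i - 2 - M i i`. -/
def cInt (i : Fin r) : ℤ := 2 * (D.p i : ℤ) - 2 - D.M i i

/-- The row sums of the intersection matrix. -/
def rowSum (i : Fin r) : ℤ := ∑ j, D.M i j

theorem cast_cInt (i : Fin r) : (D.cInt i : ℚ) = D.c i := by simp [cInt, c]

theorem dotProduct_mulVec_neg {x : Fin r → ℚ} (hx : x ≠ 0) :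
    x ⬝ᵥ (D.M.map (Int.cast : ℤ → ℚ) *ᵥ x) < 0 := by
  have h := D.negdef (fun i => (x i : ℝ)) fun h => hx (funext fun i => by
    have := congrFun h i
    simpa using this)
  simp only [dotProduct, mulVec, Matrix.map_apply] at h ⊢
  exact_mod_cast h

theorem sum_sum_neg {x : Fin r → ℤ} (hx : x ≠ 0) : ∑ i, ∑ j, x i * D.M i j * x j < 0 := by
  have h := D.negdef (fun i => (x i : ℝ)) fun h => hx (funext fun i => by
    have := congrFun h i
    simpa using this)
  simp only [dotProduct, mulVec, Matrix.map_apply, Finset.mul_sum, ← mul_assoc] at h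
  exact_mod_cast h

theorem diag_neg (i : Fin r) : D.M i i < 0 := by
  have := D.sum_sum_neg (x := Pi.single i 1) (by simp)
  simpa [Pi.single_apply, Finset.sum_ite_eq', ite_mul, mul_ite] using this

theorem cInt_nonneg (i : Fin r) : 0 ≤ D.cInt i := by
  have h1 := D.diag_neg i
  have h2 := D.diag_le_neg_two i
  unfold cInt
  omega

theorem neg_diag_le (i : Fin r) : -D.M i i ≤ D.cInt i + 2 := by
  unfold cInt
  omega

theorem diag_eq_of_cInt_eq_zero {i : Fin r} (h : D.cInt i = 0) : D.M i i = -2 := by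
  have h1 := D.diag_neg i
  have h2 := D.diag_le_neg_two i
  unfold cInt at h
  omega

theorem dotProduct_mulVec_eq_networkForm (x y : Fin r → ℚ) :
    y ⬝ᵥ (D.M.map (Int.cast : ℤ → ℚ) *ᵥ x) =
      networkForm Finset.univ D.rowSum (unitEdges D.M) x y := by
  have h := two_mul_sum_unitEdges D.symm D.offdiag_nonneg (edgeForm x y)
    fun i j => edgeForm_swap x y j i 1
  have h1 : ∑ i, ∑ j, (D.M i j : ℚ) * (x j * y j) = ∑ i, ∑ j, (D.M i j : ℚ) * (x i * y i) := by
    rw [Finset.sum_comm]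
    exact Finset.sum_congr rfl fun i _ => Finset.sum_congr rfl fun j _ => by rw [D.symm.apply]
  have h2 : ∑ i, ∑ j, (D.M i j : ℚ) * (x i * y j) = ∑ i, ∑ j, (D.M i j : ℚ) * (x j * y i) := by
    rw [Finset.sum_comm]
    exact Finset.sum_congr rfl fun i _ => Finset.sum_congr rfl fun j _ => by rw [D.symm.apply]
  have h3 : ∑ i, ∑ j, (D.M i j : ℚ) * edgeForm x y (i, j, 1) =
      ∑ i, ∑ j, (D.M i j : ℚ) * (x j * y j) - ∑ i, ∑ j, (D.M i j : ℚ) * (x j * y i)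
        - ∑ i, ∑ j, (D.M i j : ℚ) * (x i * y j) + ∑ i, ∑ j, (D.M i j : ℚ) * (x i * y i) := by
    simp only [← Finset.sum_sub_distrib, ← Finset.sum_add_distrib, edgeForm]
    refine Finset.sum_congr rfl fun i _ => Finset.sum_congr rfl fun j _ => ?_
    push_cast
    ring
  have h4 : ∑ i, (D.M i i : ℚ) * edgeForm x y (i, i, 1) = 0 := by simp [edgeForm]
  have h5 : ∑ i, (D.rowSum i : ℚ) * x i * y i = ∑ i, ∑ j, (D.M i j : ℚ) * (x i * y i) := by
    simp only [rowSum, Int.cast_sum, Finset.sum_mul, mul_assoc]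
  have h6 : y ⬝ᵥ (D.M.map (Int.cast : ℤ → ℚ) *ᵥ x) = ∑ i, ∑ j, (D.M i j : ℚ) * (x j * y i) := by
    simp only [dotProduct, mulVec, Matrix.map_apply, Finset.mul_sum]
    exact Finset.sum_congr rfl fun i _ => Finset.sum_congr rfl fun j _ => by ring
  rw [networkForm, h5, h6]
  linarith

theorem two_mul_card_unitEdges :
    2 * (Multiset.card (unitEdges D.M) : ℤ) = ∑ i, D.rowSum i - ∑ i, D.M i i := by
  have h := two_mul_sum_unitEdges D.symm D.offdiag_nonneg (fun _ => 1) fun _ _ => rfl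
  simp only [Multiset.map_const', Multiset.sum_replicate, nsmul_eq_mul, mul_one] at h
  simp only [rowSum]
  exact_mod_cast h

theorem valency_unitEdges (k : Fin r) :
    (((unitEdges D.M).map (edgeEnds k)).sum : ℤ) = D.rowSum k - D.M k k := by
  have h := two_mul_sum_unitEdges D.symm D.offdiag_nonneg (fun e => (edgeEnds k e : ℚ))
    fun i j => by rw [edgeEnds_swap]
  have h1 : ((unitEdges D.M).map fun e => (edgeEnds k e : ℚ)).sum =
      (((unitEdges D.M).map (edgeEnds k)).sum : ℚ) := by
    rw [Nat.cast_multiset_sum, Multiset.map_map]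
    rfl
  have h2 : ∑ i, ∑ j, (D.M i j : ℚ) * (if i = k then 1 else 0) = D.rowSum k := by
    simp only [← Finset.sum_mul]
    simp [rowSum]
  have h3 : ∑ i, ∑ j, (D.M i j : ℚ) * (if j = k then 1 else 0) = D.rowSum k := by
    rw [← h2, Finset.sum_comm]
    exact Finset.sum_congr rfl fun i _ => Finset.sum_congr rfl fun j _ => by rw [D.symm.apply]
  have h4 : ∑ i, (D.M i i : ℚ) * (if i = k then 1 else 0) = D.M k k := by simp
  simp only [edgeEnds, Nat.cast_add, Nat.cast_ite, Nat.cast_one, Nat.cast_zero, mul_add,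
    Finset.sum_add_distrib, h2, h3, h4] at h
  have h5 : (((unitEdges D.M).map (edgeEnds k)).sum : ℚ) = D.rowSum k - D.M k k := by
    rw [← h1]
    simp only [edgeEnds, Nat.cast_add, Nat.cast_ite, Nat.cast_one, Nat.cast_zero]
    linarith
  generalize ((unitEdges D.M).map (edgeEnds k)).sum = s at h5 ⊢
  exact_mod_cast h5

theorem isNetworkSolution {n : Fin r → ℚ}
    (hn : D.M.map (Int.cast : ℤ → ℚ) *ᵥ n = -D.c) :
    IsNetworkSolution Finset.univ D.rowSum D.cInt (unitEdges D.M) n where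
  length_pos e he := by rw [mem_unitEdges_length he]; exact one_pos
  ends_mem e _ := ⟨Finset.mem_univ _, Finset.mem_univ _⟩
  valency i _ ha hc := by
    have := D.valency_unitEdges i
    rw [ha, D.diag_eq_of_cInt_eq_zero hc] at this
    omega
  neg x := by
    rintro ⟨i, -, hi⟩
    rw [← dotProduct_mulVec_eq_networkForm]
    exact D.dotProduct_mulVec_neg fun h => hi (congrFun h i)
  sol x := by
    rw [← dotProduct_mulVec_eq_networkForm, hn]
    simp only [dotProduct, Pi.neg_apply, mul_neg, Finset.sum_neg_distrib, cast_cInt, mul_comm]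

theorem diag_le_sum_of_mem {s : Finset (Fin r)} {i : Fin r} (hi : i ∈ s) :
    D.M i i ≤ ∑ j ∈ s, D.M i j := by
  rw [← Finset.add_sum_erase s _ hi]
  have := Finset.sum_nonneg fun j (hj : j ∈ s.erase i) =>
    D.offdiag_nonneg i j (Finset.ne_of_mem_erase hj).symm
  omega

/-- Connectedness bounds the sum of the row sums from below. -/
theorem le_sum_rowSum : -2 - ∑ i, D.cInt i ≤ ∑ i, D.rowSum i := by
  classical
  set G := SimpleGraph.fromRel fun i j : Fin r => 0 < D.M i j with hG
  have hconn : G.Connected := D.connected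
  have hcard := hconn.card_vert_le_card_edgeSet_add_one
  have hdeg := G.sum_degrees_eq_twice_card_edges
  have hle : ∀ i, (G.degree i : ℤ) ≤ D.rowSum i - D.M i i := fun i => by
    have hadj : ∀ j ∈ G.neighborFinset i, i ≠ j ∧ 0 < D.M i j := fun j hj => by
      rw [SimpleGraph.mem_neighborFinset, hG, SimpleGraph.fromRel_adj, D.symm.apply i j,
        or_self] at hj
      exact hj
    have h1 : (G.degree i : ℤ) ≤ ∑ j ∈ G.neighborFinset i, D.M i j := by
      have := Finset.card_nsmul_le_sum (G.neighborFinset i) (fun j => D.M i j) 1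
        fun j hj => (hadj j hj).2
      simpa using this
    have h2 : D.rowSum i - D.M i i = ∑ j ∈ Finset.univ.erase i, D.M i j := by
      rw [rowSum, ← Finset.add_sum_erase _ _ (Finset.mem_univ i)]
      ring
    rw [h2]
    exact h1.trans (Finset.sum_le_sum_of_subset_of_nonneg
      (fun j hj => Finset.mem_erase.2 ⟨(hadj j hj).1.symm, Finset.mem_univ j⟩)
      fun j hj _ => D.offdiag_nonneg i j (Finset.ne_of_mem_erase hj).symm)
  have hsum := Finset.sum_le_sum fun i (_ : i ∈ Finset.univ) => hle i
  have hdiag := Finset.sum_le_sum fun i (_ : i ∈ Finset.univ) => D.neg_diag_le i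
  rw [Finset.sum_sub_distrib] at hsum
  rw [Finset.sum_neg_distrib, Finset.sum_add_distrib] at hdiag
  simp only [Finset.sum_const, Finset.card_univ, Fintype.card_fin, nsmul_eq_mul] at hdiag
  rw [Nat.card_fin, Nat.card_eq_fintype_card, ← SimpleGraph.edgeFinset_card] at hcard
  have hdeg' : ∑ i, (G.degree i : ℤ) = 2 * (G.edgeFinset.card : ℤ) := by exact_mod_cast hdeg
  omega

theorem sum_rowSum_neg (hr : 0 < r) : ∑ i, D.rowSum i < 0 := by
  have := D.sum_sum_neg (x := fun _ => 1) fun h => by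
    have := congrFun h ⟨0, hr⟩
    simp at this
  simpa [rowSum] using this

/-- The total size of row sums is bounded in terms of `c`. -/
theorem sum_abs_rowSum_le (hr : 0 < r) :
    ∑ i, |D.rowSum i| ≤ 6 + 9 * ∑ i, D.cInt i := by
  classical
  set C := ∑ i, D.cInt i with hC
  set L : Finset (Fin r) := {i | D.cInt i = 0 ∧ D.rowSum i < 0} with hL
  have hLmem : ∀ i, i ∈ L ↔ D.cInt i = 0 ∧ D.rowSum i < 0 := fun i => by simp [hL]
  have hlow := D.le_sum_rowSum
  have hsplit := Finset.sum_add_sum_compl L D.rowSum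
  have habs := Finset.sum_add_sum_compl L fun i => |D.rowSum i|
  have hneg := D.sum_sum_neg (x := fun i => 2 - if i ∈ L then 1 else 0) fun h => by
    have := congrFun h ⟨0, hr⟩
    simp only [Pi.zero_apply] at this
    split_ifs at this <;> omega
  have hexp : ∑ i, ∑ j, (2 - if i ∈ L then 1 else 0) * D.M i j * (2 - if j ∈ L then 1 else 0) =
      4 * ∑ i, D.rowSum i - 4 * ∑ i ∈ L, D.rowSum i + ∑ i ∈ L, ∑ j ∈ L, D.M i j := by
    have h1 : ∑ i ∈ L, D.rowSum i = ∑ i, ∑ j, (if i ∈ L then 1 else 0) * D.M i j := by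
      simp_rw [← Finset.mul_sum, ite_mul, one_mul, zero_mul, Finset.sum_ite_mem,
        Finset.univ_inter, rowSum]
    have h2 : ∑ i ∈ L, D.rowSum i = ∑ i, ∑ j, (if j ∈ L then 1 else 0) * D.M i j := by
      rw [h1, Finset.sum_comm]
      exact Finset.sum_congr rfl fun i _ => Finset.sum_congr rfl fun j _ => by rw [D.symm.apply]
    have h3 : ∑ i ∈ L, ∑ j ∈ L, D.M i j =
        ∑ i, ∑ j, (if i ∈ L then 1 else 0) * ((if j ∈ L then 1 else 0) * D.M i j) := by
      simp_rw [← Finset.mul_sum, ite_mul, one_mul, zero_mul, Finset.sum_ite_mem,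
        Finset.univ_inter]
    have h4 : 4 * ∑ i ∈ L, D.rowSum i = 2 * ∑ i ∈ L, D.rowSum i + 2 * ∑ i ∈ L, D.rowSum i := by
      ring
    rw [h4, h3]
    nth_rewrite 1 [h1]
    rw [h2]
    simp only [rowSum, Finset.mul_sum, ← Finset.sum_add_distrib, ← Finset.sum_sub_distrib]
    exact Finset.sum_congr rfl fun i _ => Finset.sum_congr rfl fun j _ => by ring
  rw [hexp] at hneg
  have hLL : -2 * (L.card : ℤ) ≤ ∑ i ∈ L, ∑ j ∈ L, D.M i j := by
    have := Finset.card_nsmul_le_sum L (fun i => ∑ j ∈ L, D.M i j) (-2) fun i hi => by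
      rw [← D.diag_eq_of_cInt_eq_zero ((hLmem i).1 hi).1]
      exact D.diag_le_sum_of_mem hi
    rw [nsmul_eq_mul] at this
    linarith
  have hLcard : ∑ i ∈ L, D.rowSum i ≤ -(L.card : ℤ) := by
    have := Finset.sum_le_card_nsmul L D.rowSum (-1) fun i hi => by
      have := ((hLmem i).1 hi).2
      omega
    rw [nsmul_eq_mul] at this
    linarith
  have hLabs : ∑ i ∈ L, |D.rowSum i| = -∑ i ∈ L, D.rowSum i := by
    rw [← Finset.sum_neg_distrib]
    exact Finset.sum_congr rfl fun i hi => abs_of_neg ((hLmem i).1 hi).2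
  have hcompl : ∑ i ∈ Lᶜ, |D.rowSum i| ≤ ∑ i ∈ Lᶜ, D.rowSum i + 6 * ∑ i ∈ Lᶜ, D.cInt i := by
    rw [Finset.mul_sum, ← Finset.sum_add_distrib]
    refine Finset.sum_le_sum fun i hi => ?_
    have h1 := D.cInt_nonneg i
    have h2 := D.neg_diag_le i
    have h3 : D.M i i ≤ D.rowSum i := D.diag_le_sum_of_mem (Finset.mem_univ i)
    have h4 : ¬(D.cInt i = 0 ∧ D.rowSum i < 0) := by
      rw [← hLmem]
      exact Finset.mem_compl.1 hi
    rw [abs_le]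
    constructor <;> omega
  have hCcompl : ∑ i ∈ Lᶜ, D.cInt i ≤ C :=
    Finset.sum_le_sum_of_subset_of_nonneg (Finset.subset_univ _) fun i _ _ => D.cInt_nonneg i
  omega

variable {D} {n : Fin r → ℚ}

theorem nonneg_of_mulVec_eq (hn : D.M.map (Int.cast : ℤ → ℚ) *ᵥ n = -D.c) (i : Fin r) :
    0 ≤ n i := by
  by_contra! hi
  set y : Fin r → ℚ := fun j => max (-n j) 0 with hy
  have hyne : y ≠ 0 := fun h => by
    have := congrFun h i
    simp only [hy, Pi.zero_apply, max_eq_right_iff] at this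
    linarith
  have hneg := D.dotProduct_mulVec_neg hyne
  have h1 : y ⬝ᵥ (D.M.map (Int.cast : ℤ → ℚ) *ᵥ n) ≤ 0 := by
    rw [hn, dotProduct_neg, neg_nonpos]
    refine Finset.sum_nonneg fun j _ => mul_nonneg (le_max_right _ _) ?_
    rw [← D.cast_cInt]
    exact_mod_cast D.cInt_nonneg j
  have h2 : 0 ≤ y ⬝ᵥ (D.M.map (Int.cast : ℤ → ℚ) *ᵥ (n + y)) := by
    simp only [dotProduct, mulVec, Finset.mul_sum, Matrix.map_apply, Pi.add_apply]
    refine Finset.sum_nonneg fun j _ => Finset.sum_nonneg fun k _ => ?_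
    have hyj : 0 ≤ y j := le_max_right _ _
    have hk : 0 ≤ n k + y k := by
      have : -n k ≤ y k := le_max_left _ _
      linarith
    rcases eq_or_ne j k with rfl | hjk
    · rcases le_total 0 (n j) with h | h
      · have : y j = 0 := max_eq_right (by linarith)
        simp [this]
      · have : y j = -n j := max_eq_left (by linarith)
        simp [this]
    · have hM : (0 : ℚ) ≤ D.M j k := by exact_mod_cast D.offdiag_nonneg j k hjk
      positivity
  rw [mulVec_add, dotProduct_add] at h2
  linarith

/-- The sum of the `c i` is bounded in terms of `-K²`. -/
theorem sum_cInt_le (hn : D.M.map (Int.cast : ℤ → ℚ) *ᵥ n = -D.c) :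
    ((∑ i, D.cInt i : ℤ) : ℚ) ≤ 3 * ∑ i, (D.cInt i : ℚ) * n i := by
  rw [Int.cast_sum, Finset.mul_sum]
  refine Finset.sum_le_sum fun i _ => ?_
  have hc := D.cInt_nonneg i
  rcases hc.eq_or_lt with h0 | hpos
  · simp [← h0]
  have hrow : (D.cInt i : ℚ) ≤ -D.M i i * n i := by
    have h1 := congrFun hn i
    simp only [mulVec, dotProduct, Matrix.map_apply, Pi.neg_apply, ← D.cast_cInt] at h1
    rw [← Finset.add_sum_erase _ _ (Finset.mem_univ i)] at h1
    have h2 : 0 ≤ ∑ j ∈ Finset.univ.erase i, (D.M i j : ℚ) * n j :=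
      Finset.sum_nonneg fun j hj => mul_nonneg
        (by exact_mod_cast D.offdiag_nonneg i j (Finset.ne_of_mem_erase hj).symm)
        (nonneg_of_mulVec_eq hn j)
    linarith
  have hdiag : (-D.M i i : ℚ) ≤ 3 * D.cInt i := by
    have := D.neg_diag_le i
    have h3 : -D.M i i ≤ 3 * D.cInt i := by omega
    exact_mod_cast h3
  nlinarith [mul_le_mul_of_nonneg_right hdiag (nonneg_of_mulVec_eq hn i)]

variable (D)

theorem isUnit_det : IsUnit (D.M.map (Int.cast : ℤ → ℚ)).det := by
  rw [isUnit_iff_ne_zero]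
  intro h
  obtain ⟨x, hx, hMx⟩ := Matrix.exists_mulVec_eq_zero_iff.2 h
  have := D.dotProduct_mulVec_neg hx
  simp [hMx] at this

end ResolutionDatum

/-- **Theorem 3.6.** For fixed value `v` of `-K²`, the numerical indices are bounded: the
least positive integer `ρ` such that `ρ · M⁻¹ c` has integer entries is bounded by a constant
depending only on `v`. -/
theorem numerical_index_bounded (v : ℚ) :
    ∃ N : ℕ, ∀ (r : ℕ), 0 < r → ∀ D : ResolutionDatum r, D.negK2 = v →
      ∀ ρ : ℕ,
        IsLeast {ρ' : ℕ | 0 < ρ' ∧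
            ∀ i : Fin r, ∃ z : ℤ,
              (ρ' : ℚ) * (((D.M.map (Int.cast : ℤ → ℚ))⁻¹ *ᵥ D.c) i) = (z : ℚ)} ρ →
        ρ ≤ N := by
  obtain ⟨B, hB⟩ : ∃ B : ℕ, B = 6 + 11 * ⌈3 * v⌉₊ := ⟨_, rfl⟩
  obtain ⟨N, hN⟩ := exists_bound_clearsDenominators B v
  refine ⟨N, fun r hr D hv ρ hρ => ?_⟩
  set n : Fin r → ℚ := -((D.M.map (Int.cast : ℤ → ℚ))⁻¹ *ᵥ D.c) with hn
  have hMn : D.M.map (Int.cast : ℤ → ℚ) *ᵥ n = -D.c := by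
    rw [hn, mulVec_neg, mulVec_mulVec, Matrix.mul_nonsing_inv _ D.isUnit_det, one_mulVec]
  have hcn : ∑ i, (D.cInt i : ℚ) * n i = v := by
    rw [← hv, ResolutionDatum.negK2, ← dotProduct_neg]
    simp only [D.cast_cInt]
    rfl
  have hC : ∑ i, D.cInt i ≤ (⌈3 * v⌉₊ : ℤ) := by
    have h := ResolutionDatum.sum_cInt_le hMn
    rw [hcn] at h
    have := h.trans (Nat.le_ceil (3 * v))
    exact_mod_cast this
  have hA := D.sum_abs_rowSum_le hr
  have hcle : ∀ i, D.cInt i ≤ ∑ i, D.cInt i := fun i =>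
    Finset.single_le_sum (fun j _ => D.cInt_nonneg j) (Finset.mem_univ i)
  have hale : ∀ i, |D.rowSum i| ≤ ∑ i, |D.rowSum i| := fun i =>
    Finset.single_le_sum (f := fun i => |D.rowSum i|) (fun j _ => abs_nonneg _)
      (Finset.mem_univ i)
  obtain ⟨V, -, E, hsol, hV, hVc, hcard, hclear⟩ := (D.isNetworkSolution hMn).exists_reduced
  have hVcard : (V.card : ℤ) ≤ ∑ i, |D.rowSum i| + ∑ i, D.cInt i := by
    rw [← Finset.sum_add_distrib]
    have h1 : (V.card : ℤ) ≤ ∑ i ∈ V, (|D.rowSum i| + D.cInt i) := by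
      have := Finset.card_nsmul_le_sum V (fun i => |D.rowSum i| + D.cInt i) 1 fun i hi => by
        have h2 := abs_nonneg (D.rowSum i)
        have h3 := D.cInt_nonneg i
        rcases hV i hi with h | h
        · have := abs_pos.2 h
          omega
        · omega
      simpa using this
    exact h1.trans (Finset.sum_le_sum_of_subset_of_nonneg (Finset.subset_univ _) fun i _ _ =>
      add_nonneg (abs_nonneg _) (D.cInt_nonneg i))
  have hEcard := D.two_mul_card_unitEdges
  have hdiag := Finset.sum_le_sum fun i (_ : i ∈ Finset.univ) => D.neg_diag_le i
  rw [Finset.sum_neg_distrib, Finset.sum_add_distrib] at hdiag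
  simp only [Finset.sum_const, Finset.card_univ, Fintype.card_fin, nsmul_eq_mul] at hdiag hcard
  have hneg := D.sum_rowSum_neg hr
  have hC0 : 0 ≤ ∑ i, D.cInt i := Finset.sum_nonneg fun i _ => D.cInt_nonneg i
  obtain ⟨σ, hσ, hσN, hσclear⟩ := hN r V D.rowSum D.cInt E n hsol (by omega) (by omega)
    (fun i => by have := hale i; omega)
    (fun i => by rw [abs_of_nonneg (D.cInt_nonneg i)]; have := hcle i; omega)
    (by
      rw [← hcn]
      refine Finset.sum_subset (Finset.subset_univ _) fun i _ hi => ?_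
      rw [hVc i (Finset.mem_univ i) hi]
      simp)
  refine (hρ.2 ⟨hσ, fun i => ?_⟩).trans hσN
  obtain ⟨z, hz⟩ := (hclear σ hσclear).1 i (Finset.mem_univ i)
  refine ⟨-z, ?_⟩
  push_cast
  rw [← hz, hn, Pi.neg_apply]
  ring
end
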